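/- Suppose that pathwise uniqueness holds for Tsirelson's equation with noise law μ, i.e., any two solutions defined on a common probability space and sharing the same noise process N coincide a.s. Then uniqueness in law holds (any two solutions have the same law of (X,N)) and every solution is strong. -/

import Mathlib

open MeasureTheory ProbabilityTheory Filter Topology
open scoped NNReal ENNReal

universe u v w w₂

noncomputable section

/-- The sub-σ-field generated by the process `Y` from index `k` on; since index `j : ℕ`
stands for time `-j`, this is the σ-field of the past `σ(Y_j : j ≤ -k)`. -/
def past {Ω α : Type*} [MeasurableSpace α] (Y : ℕ → Ω → α) (k : ℕ) : MeasurableSpace Ω :=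
  ⨆ j ≥ k, MeasurableSpace.comap (Y j) inferInstance

/-- A solution of Tsirelson's equation with noise law `μ`.  The index `k : ℕ` stands for the
time `-k ∈ -ℕ`, so that time `k - 1` corresponds to index `k + 1`. -/
structure IsSolution {Ω S G : Type*} [MeasurableSpace Ω] [MeasurableSpace S] [MeasurableSpace G]
    [SMul G S] (P : Measure Ω) (μ : ℕ → Measure G)
    (X : ℕ → Ω → S) (N : ℕ → Ω → G) : Prop where
  measurable_X : ∀ k, Measurable (X k)
  measurable_N : ∀ k, Measurable (N k)
  eqn : ∀ k, X k =ᵐ[P] fun ω => N k ω • X (k + 1) ω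
  indep : ∀ k, Indep (MeasurableSpace.comap (N k) inferInstance)
      (past X (k + 1) ⊔ past N (k + 1)) P
  law_N : ∀ k, P.map (N k) = μ k

/-- The joint law of `(X, N)` on the path space `S^{-ℕ} × Σ^{-ℕ}`. -/
def jointLaw {Ω S G : Type*} [MeasurableSpace Ω] [MeasurableSpace S] [MeasurableSpace G]
    (P : Measure Ω) (X : ℕ → Ω → S) (N : ℕ → Ω → G) : Measure ((ℕ → S) × (ℕ → G)) :=
  P.map fun ω => (fun k => X k ω, fun k => N k ω)

/-- A solution is strong if each `X k` is a.s. equal to a `past N k`-measurable function,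
i.e. `X k` is measurable for the `P`-completion of `σ(N_j : j ≤ -k)`. -/
def IsStrong {Ω S G : Type*} [MeasurableSpace Ω] [MeasurableSpace S] [MeasurableSpace G]
    (P : Measure Ω) (X : ℕ → Ω → S) (N : ℕ → Ω → G) : Prop :=
  ∀ k, ∃ Y : Ω → S, Measurable[past N k] Y ∧ X k =ᵐ[P] Y

/-- Triviality of the tail σ-field `⨅ k, m k`. -/
def TailTrivial {Ω : Type*} [MeasurableSpace Ω] (P : Measure Ω)
    (m : ℕ → MeasurableSpace Ω) : Prop :=
  ∀ A : Set Ω, MeasurableSet[⨅ k, m k] A → P A = 0 ∨ P A = 1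

/-- Convolution `μ * ν` of a measure on the acting semigroup with a measure on the space:
the pushforward of `μ ⊗ ν` under the action map. -/
def conv {G S : Type*} [MeasurableSpace G] [MeasurableSpace S] [SMul G S]
    (μ : Measure G) (ν : Measure S) : Measure S :=
  (μ.prod ν).map fun p => p.1 • p.2

/-- Convolution of two measures on the semigroup. -/
def convG {G : Type*} [MeasurableSpace G] [Mul G] (μ ν : Measure G) : Measure G :=
  (μ.prod ν).map fun p => p.1 * p.2

/-- `prodN N n j = N_n · N_{n+1} · ⋯ · N_{n+j}`; in the time-indexing of the paper (index `m`
is time `-m`) this is `N_{k,l}` with `k = -n` and `l = -(n+j)-1 → -∞` as `j → ∞`. -/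
def prodN {Ω G : Type*} [Mul G] (N : ℕ → Ω → G) (n : ℕ) : ℕ → Ω → G
  | 0 => N n
  | j + 1 => fun ω => prodN N n j ω * N (n + j + 1) ω

/-- `convIter μ n j = μ_n * μ_{n+1} * ⋯ * μ_{n+j}`, the law analogue of `prodN`. -/
def convIter {G : Type*} [MeasurableSpace G] [Mul G] (μ : ℕ → Measure G) (n : ℕ) :
    ℕ → Measure G
  | 0 => μ n
  | j + 1 => convG (convIter μ n j) (μ (n + j + 1))

/-- `sigPow G n` is `Σ^{n+1}`, the set of products of `n+1` elements of `Σ = G`. -/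
def sigPow (G : Type*) [Mul G] : ℕ → Set G
  | 0 => Set.univ
  | n + 1 => Set.image2 (· * ·) (sigPow G n) Set.univ

/-- Two sub-σ-fields are equal up to `P`-null sets. -/
def EqModNull {Ω : Type*} [MeasurableSpace Ω] (P : Measure Ω)
    (m₁ m₂ : MeasurableSpace Ω) : Prop :=
  (∀ A, MeasurableSet[m₁] A → ∃ B, MeasurableSet[m₂] B ∧ P (symmDiff A B) = 0) ∧
  (∀ B, MeasurableSet[m₂] B → ∃ A, MeasurableSet[m₁] A ∧ P (symmDiff A B) = 0)

end

section Context

variable {S : Type u} {G : Type v}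
  [TopologicalSpace S] [CompactSpace S] [TopologicalSpace.MetrizableSpace S]
  [SecondCountableTopology S] [MeasurableSpace S] [BorelSpace S]
  [TopologicalSpace G] [CompactSpace G] [TopologicalSpace.MetrizableSpace G]
  [SecondCountableTopology G] [MeasurableSpace G] [BorelSpace G]
  [Semigroup G] [ContinuousMul G]
  [SMul G S] [ContinuousSMul G S] [IsScalarTower G G S]

end Context

/-!
Two solutions with the same noise law can be glued on one probability space: sample the noise,
then draw the two trajectories independently from their conditional laws given the noise. Pathwise
uniqueness puts the gluing on the diagonal, so the two joint laws agree. Gluing a solution with an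
independent copy of itself shows that its conditional law given the noise is a point mass, i.e. the
trajectory is a function `F` of the whole noise. To see that `X k` depends on the noise from
index `k` on only, freeze `N 0, …, N (k - 1)` one after the other: each `N j` is independent of
`X k` and the remaining noise.
-/

section Independence

variable {Ω Ω' α β E : Type*}

theorem indep_map_iff {m₁ m₂ : MeasurableSpace Ω'} [MeasurableSpace Ω] [mΩ' : MeasurableSpace Ω']
    {P : Measure Ω} {φ : Ω → Ω'} (hφ : Measurable φ) (h₁ : m₁ ≤ mΩ') (h₂ : m₂ ≤ mΩ') :
    Indep m₁ m₂ (P.map φ) ↔ Indep (m₁.comap φ) (m₂.comap φ) P := by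
  have map_iff (s t : Set Ω') (hs : MeasurableSet[m₁] s) (ht : MeasurableSet[m₂] t) :
      P.map φ (s ∩ t) = P.map φ s * P.map φ t ↔
        P (φ ⁻¹' s ∩ φ ⁻¹' t) = P (φ ⁻¹' s) * P (φ ⁻¹' t) := by
    rw [Measure.map_apply hφ ((h₁ s hs).inter (h₂ t ht)), Measure.map_apply hφ (h₁ s hs),
      Measure.map_apply hφ (h₂ t ht), Set.preimage_inter]
  rw [Indep_iff, Indep_iff]
  constructor
  · rintro h _ _ ⟨s, hs, rfl⟩ ⟨t, ht, rfl⟩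
    exact (map_iff s t hs ht).1 (h s t hs ht)
  · intro h s t hs ht
    exact (map_iff s t hs ht).2 (h _ _ ⟨s, hs, rfl⟩ ⟨t, ht, rfl⟩)

theorem iIndep_of_indep_iSup_gt {ι : Type*} [LinearOrder ι] {m : ι → MeasurableSpace Ω}
    [MeasurableSpace Ω] {P : Measure Ω} [IsProbabilityMeasure P]
    (h : ∀ i, Indep (m i) (⨆ j > i, m j) P) :
    iIndep m P := by
  refine (iIndep_iff m P).2 fun s f => ?_
  induction s using Finset.induction_on_min with
  | empty => simp
  | insert i s hi ih =>
    intro hf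
    have later_mem : MeasurableSet[⨆ j > i, m j] (⋂ j ∈ s, f j) :=
      Finset.measurableSet_biInter s fun j hj =>
        le_iSup₂_of_le (f := fun j (_ : j > i) => m j) j (hi j hj) le_rfl _
          (hf j (Finset.mem_insert_of_mem hj))
    rw [Finset.set_biInter_insert,
      (Indep_iff _ _ _).1 (h i) _ _ (hf i (Finset.mem_insert_self i s)) later_mem,
      ih fun j hj => hf j (Finset.mem_insert_of_mem hj),
      Finset.prod_insert fun his => (hi i his).false]

theorem exists_ae_of_indepFun [MeasurableSpace Ω] {mα : MeasurableSpace α}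
    {mβ : MeasurableSpace β} {P : Measure Ω} [IsProbabilityMeasure P] {W : Ω → α} {Z : Ω → β}
    (hWZ : IndepFun W Z P) (hW : AEMeasurable W P) (hZ : AEMeasurable Z P) {r : α → β → Prop}
    (hr : MeasurableSet {p : α × β | r p.1 p.2}) (h : ∀ᵐ ω ∂P, r (W ω) (Z ω)) :
    ∃ a, ∀ᵐ ω ∂P, r a (Z ω) := by
  have : IsProbabilityMeasure (P.map W) := Measure.isProbabilityMeasure_map hW
  have h_prod : ∀ᵐ p ∂(P.map W).prod (P.map Z), r p.1 p.2 := by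
    rwa [← hWZ.map_prod_eq_prod_map_map hW hZ, ae_map_iff (hW.prodMk hZ) hr]
  obtain ⟨a, ha⟩ := (Measure.ae_ae_of_ae_prod h_prod).exists
  exact ⟨a, ae_of_ae_map hZ ha⟩

/- Write `V = f (W, ·)` with `f` jointly measurable. Since `W` is independent of the σ-field that
carries both `U` and `f (a, ·)`, Fubini lets one freeze `W` at a suitable constant `a`. -/
theorem exists_measurable_ae_eq_of_indep [MeasurableSpace E] [StandardBorelSpace E]
    {m' m : MeasurableSpace Ω} [mΩ : MeasurableSpace Ω] {mα : MeasurableSpace α} {P : Measure Ω}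
    [IsProbabilityMeasure P] (hm' : m' ≤ m) (hm : m ≤ mΩ) {W : Ω → α} (hW : Measurable W)
    (hWm : Indep (mα.comap W) m P) {U V : Ω → E} (hU : Measurable[m] U)
    (hV : Measurable[mα.comap W ⊔ m'] V) (hUV : U =ᵐ[P] V) :
    ∃ V' : Ω → E, Measurable[m'] V' ∧ U =ᵐ[P] V' := by
  have : Nonempty E := (nonempty_of_isProbabilityMeasure P).map U
  obtain ⟨f, hf, rfl⟩ : ∃ f : α × Ω → E, Measurable[mα.prod m'] f ∧
      V = f ∘ fun ω => (W ω, ω) := by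
    refine Measurable.exists_eq_measurable_comp (mY := mα.prod m') ?_
    rwa [MeasurableSpace.comap_prodMk, ← Function.id_def, MeasurableSpace.comap_id]
  have hW_id : @IndepFun _ _ _ _ mα m W id P :=
    (@IndepFun_iff_Indep _ _ _ _ mα m W id P).2 (by rwa [MeasurableSpace.comap_id])
  have h_meas : MeasurableSet[mα.prod m] {p : α × Ω | U p.2 = f p} :=
    @measurableSet_eq_fun _ _ (mα.prod m) _ _ _ _ (hU.comp (@measurable_snd _ _ mα m))
      (hf.mono (sup_le_sup le_rfl (MeasurableSpace.comap_mono hm')) le_rfl)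
  obtain ⟨a, ha⟩ := exists_ae_of_indepFun (r := fun a ω => U ω = f (a, ω)) hW_id hW.aemeasurable
    (@Measurable.aemeasurable _ _ mΩ m _ _ (measurable_id'' hm)) h_meas hUV
  exact ⟨fun ω => f (a, ω), hf.comp (@measurable_prodMk_left _ _ mα m' a), ha⟩

end Independence

section Gluing

variable {H E E₁ E₂ Ω₁ Ω₂ : Type*} [MeasurableSpace H] [MeasurableSpace E]
  [MeasurableSpace E₁] [MeasurableSpace E₂] [StandardBorelSpace E] [Nonempty E]
  [StandardBorelSpace E₁] [Nonempty E₁] [StandardBorelSpace E₂] [Nonempty E₂]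
  [MeasurableSpace Ω₁] [MeasurableSpace Ω₂]

theorem exists_measurable_eq_of_ae_eq_const (κ : Kernel H E) [IsMarkovKernel κ] :
    ∃ F : H → E, Measurable F ∧ ∀ n x, (∀ᵐ y ∂κ n, y = x) → F n = x := by
  have h_emb := measurableEmbedding_embeddingReal E
  obtain ⟨r, hr, hr_left⟩ := h_emb.exists_measurable_extend measurable_id fun _ => inferInstance
  refine ⟨fun n => r (∫ y, embeddingReal E y ∂κ n),
    hr.comp h_emb.measurable.stronglyMeasurable.integral_kernel.measurable, fun n x hx => ?_⟩
  have mean_eq : ∫ y, embeddingReal E y ∂κ n = embeddingReal E x := by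
    rw [integral_congr_ae (hx.mono fun y hy => congrArg (embeddingReal E) hy)]
    simp
  exact (congrArg r mean_eq).trans (congrFun hr_left x)

theorem exists_measurable_ae_compProd_of_ae_prod_self {l : Measure H} [SFinite l]
    {κ : Kernel H E} [IsMarkovKernel κ] (h : ∀ᵐ p ∂(l ⊗ₘ (κ ×ₖ κ)), p.2.1 = p.2.2) :
    ∃ F : H → E, Measurable F ∧ ∀ᵐ p ∂(l ⊗ₘ κ), p.2 = F p.1 := by
  obtain ⟨F, hF, hF_eq⟩ := exists_measurable_eq_of_ae_eq_const κ
  refine ⟨F, hF, Measure.ae_compProd_of_ae_ae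
    (measurableSet_eq_fun measurable_snd (hF.comp measurable_fst)) ?_⟩
  filter_upwards [Measure.ae_ae_of_ae_compProd h] with n hn
  rw [Kernel.prod_apply] at hn
  obtain ⟨x, hx⟩ := (Measure.ae_ae_of_ae_prod hn).exists
  have h_const : ∀ᵐ y ∂κ n, y = x := hx.mono fun y hy => hy.symm
  filter_upwards [h_const] with y hy
  rw [hy, hF_eq n x h_const]

/-- The gluing of `(X₁, N₁)` and `(X₂, N₂)` along a common law of `N₁` and `N₂`: sample the noise,
then sample the two states independently from their conditional laws given the noise. A point is
a triple (noise, first state, second state). The noise is drawn from the law of `N₁`, so the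
definition is symmetric only when `N₂` has the same law. -/
noncomputable def gluing (P₁ : Measure Ω₁) [IsFiniteMeasure P₁] (X₁ : Ω₁ → E₁) (N₁ : Ω₁ → H)
    (P₂ : Measure Ω₂) [IsFiniteMeasure P₂] (X₂ : Ω₂ → E₂) (N₂ : Ω₂ → H) : Measure (H × E₁ × E₂) :=
  P₁.map N₁ ⊗ₘ (condDistrib X₁ N₁ P₁ ×ₖ condDistrib X₂ N₂ P₂)

theorem isProbabilityMeasure_gluing {P₁ : Measure Ω₁} [IsProbabilityMeasure P₁] {X₁ : Ω₁ → E₁}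
    {N₁ : Ω₁ → H} {P₂ : Measure Ω₂} [IsFiniteMeasure P₂] {X₂ : Ω₂ → E₂} {N₂ : Ω₂ → H}
    (hN₁ : AEMeasurable N₁ P₁) : IsProbabilityMeasure (gluing P₁ X₁ N₁ P₂ X₂ N₂) := by
  have := Measure.isProbabilityMeasure_map hN₁
  unfold gluing
  infer_instance

variable {P₁ : Measure Ω₁} [IsFiniteMeasure P₁] {X₁ : Ω₁ → E₁} {N₁ : Ω₁ → H}
  {P₂ : Measure Ω₂} [IsFiniteMeasure P₂]

theorem map_gluing_fst {X₂ : Ω₂ → E₂} {N₂ : Ω₂ → H} (hX₁ : AEMeasurable X₁ P₁) :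
    (gluing P₁ X₁ N₁ P₂ X₂ N₂).map (fun p => (p.1, p.2.1)) =
      P₁.map fun ω => (N₁ ω, X₁ ω) := by
  rw [← compProd_map_condDistrib hX₁, ← Kernel.fst_prod (condDistrib X₁ N₁ P₁)
    (condDistrib X₂ N₂ P₂), Kernel.fst_eq, Measure.compProd_map measurable_fst]
  rfl

theorem map_gluing_snd {X₂ : Ω₂ → E₂} {N₂ : Ω₂ → H} (hX₂ : AEMeasurable X₂ P₂)
    (hN : P₁.map N₁ = P₂.map N₂) :
    (gluing P₁ X₁ N₁ P₂ X₂ N₂).map (fun p => (p.1, p.2.2)) =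
      P₂.map fun ω => (N₂ ω, X₂ ω) := by
  rw [← compProd_map_condDistrib hX₂, ← hN, ← Kernel.snd_prod (condDistrib X₁ N₁ P₁)
    (condDistrib X₂ N₂ P₂), Kernel.snd_eq, Measure.compProd_map measurable_snd]
  rfl

theorem map_prodMk_eq_of_ae_gluing {X₂ : Ω₂ → E₁} {N₂ : Ω₂ → H} (hX₁ : AEMeasurable X₁ P₁)
    (hX₂ : AEMeasurable X₂ P₂) (hN : P₁.map N₁ = P₂.map N₂)
    (h : ∀ᵐ p ∂gluing P₁ X₁ N₁ P₂ X₂ N₂, p.2.1 = p.2.2) :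
    P₁.map (fun ω => (N₁ ω, X₁ ω)) = P₂.map fun ω => (N₂ ω, X₂ ω) := by
  calc P₁.map (fun ω => (N₁ ω, X₁ ω))
    _ = (gluing P₁ X₁ N₁ P₂ X₂ N₂).map (fun p => (p.1, p.2.1)) := (map_gluing_fst hX₁).symm
    _ = (gluing P₁ X₁ N₁ P₂ X₂ N₂).map (fun p => (p.1, p.2.2)) :=
      Measure.map_congr (h.mono fun p hp => congrArg (Prod.mk p.1) hp)
    _ = P₂.map fun ω => (N₂ ω, X₂ ω) := map_gluing_snd hX₂ hN

theorem exists_measurable_ae_eq_comp_of_ae_gluing_self (hX₁ : AEMeasurable X₁ P₁)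
    (hN₁ : AEMeasurable N₁ P₁) (h : ∀ᵐ p ∂gluing P₁ X₁ N₁ P₁ X₁ N₁, p.2.1 = p.2.2) :
    ∃ F : H → E₁, Measurable F ∧ X₁ =ᵐ[P₁] F ∘ N₁ := by
  rw [gluing] at h
  obtain ⟨F, hF, hF_eq⟩ := exists_measurable_ae_compProd_of_ae_prod_self h
  rw [compProd_map_condDistrib hX₁] at hF_eq
  exact ⟨F, hF, ae_of_ae_map (hN₁.prodMk hX₁) hF_eq⟩

end Gluing

section Past

variable {Ω Ω' α : Type*} [MeasurableSpace α]

theorem past_le [mΩ : MeasurableSpace Ω] {Y : ℕ → Ω → α} (hY : ∀ k, Measurable (Y k)) (k : ℕ) :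
    past Y k ≤ mΩ :=
  iSup₂_le fun j _ => (hY j).comap_le

theorem measurable_past (Y : ℕ → Ω → α) {k j : ℕ} (hkj : k ≤ j) : Measurable[past Y k] (Y j) :=
  Measurable.of_comap_le (le_iSup₂_of_le j hkj le_rfl)

theorem past_comp (Y : ℕ → Ω' → α) (φ : Ω → Ω') (k : ℕ) :
    past (fun j => Y j ∘ φ) k = (past Y k).comap φ := by
  simp only [past, MeasurableSpace.comap_iSup, MeasurableSpace.comap_comp]

theorem past_eq_comap_sup_past_succ (Y : ℕ → Ω → α) (k : ℕ) :
    past Y k = MeasurableSpace.comap (Y k) inferInstance ⊔ past Y (k + 1) := by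
  refine le_antisymm (iSup₂_le fun j hj => ?_) (sup_le ?_ ?_)
  · obtain rfl | hj := hj.eq_or_lt
    · exact le_sup_left
    · exact le_sup_of_le_right (measurable_past Y hj).comap_le
  · exact (measurable_past Y le_rfl).comap_le
  · exact iSup₂_le fun j hj => (measurable_past Y (k.le_succ.trans hj)).comap_le

end Past

/-- The trajectory of the process `Y`, viewed as a single random element of `ℕ → α`. -/
def path {Ω α : Type*} (Y : ℕ → Ω → α) (ω : Ω) : ℕ → α := fun k => Y k ω

theorem measurable_path {Ω α : Type*} [MeasurableSpace Ω] [MeasurableSpace α] {Y : ℕ → Ω → α}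
    (hY : ∀ k, Measurable (Y k)) : Measurable (path Y) :=
  measurable_pi_lambda _ hY

section Solution

variable {Ω Ω' S G : Type*} [MeasurableSpace Ω] [MeasurableSpace Ω'] [MeasurableSpace S]
  [MeasurableSpace G] [SMul G S] {P : Measure Ω} {μ : ℕ → Measure G}
  {X : ℕ → Ω → S} {N : ℕ → Ω → G}

theorem isSolution_map_iff [MeasurableEq S] [MeasurableSMul₂ G S] {X : ℕ → Ω' → S}
    {N : ℕ → Ω' → G} (hX : ∀ k, Measurable (X k)) (hN : ∀ k, Measurable (N k)) {φ : Ω → Ω'}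
    (hφ : Measurable φ) :
    IsSolution (P.map φ) μ X N ↔ IsSolution P μ (fun k => X k ∘ φ) (fun k => N k ∘ φ) := by
  have eqn_iff (k : ℕ) : (X k =ᵐ[P.map φ] fun ω => N k ω • X (k + 1) ω) ↔
      X k ∘ φ =ᵐ[P] fun ω => (N k ∘ φ) ω • (X (k + 1) ∘ φ) ω :=
    ae_map_iff hφ.aemeasurable (measurableSet_eq_fun (hX k) ((hN k).smul (hX (k + 1))))
  have indep_iff (k : ℕ) :
      Indep (MeasurableSpace.comap (N k) inferInstance) (past X (k + 1) ⊔ past N (k + 1))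
        (P.map φ) ↔
      Indep (MeasurableSpace.comap (N k ∘ φ) inferInstance)
        (past (fun j => X j ∘ φ) (k + 1) ⊔ past (fun j => N j ∘ φ) (k + 1)) P := by
    rw [indep_map_iff hφ (hN k).comap_le (sup_le (past_le hX _) (past_le hN _)),
      MeasurableSpace.comap_sup, MeasurableSpace.comap_comp, past_comp, past_comp]
  have law_eq (k : ℕ) : (P.map φ).map (N k) = P.map (N k ∘ φ) := Measure.map_map (hN k) hφ
  constructor
  · intro h
    exact ⟨fun k => (hX k).comp hφ, fun k => (hN k).comp hφ, fun k => (eqn_iff k).1 (h.eqn k),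
      fun k => (indep_iff k).1 (h.indep k), fun k => (law_eq k).symm.trans (h.law_N k)⟩
  · intro h
    exact ⟨hX, hN, fun k => (eqn_iff k).2 (h.eqn k), fun k => (indep_iff k).2 (h.indep k),
      fun k => (law_eq k).trans (h.law_N k)⟩

theorem isSolution_map_path_iff [MeasurableEq S] [MeasurableSMul₂ G S]
    (hX : ∀ k, Measurable (X k)) (hN : ∀ k, Measurable (N k)) :
    IsSolution (P.map fun ω => (path N ω, path X ω)) μ (fun k p => p.2 k) (fun k p => p.1 k) ↔
      IsSolution P μ X N :=
  isSolution_map_iff (by fun_prop) (by fun_prop) ((measurable_path hN).prodMk (measurable_path hX))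

theorem IsSolution.of_map_path_eq [MeasurableEq S] [MeasurableSMul₂ G S] (h : IsSolution P μ X N)
    {P' : Measure Ω'} {X' : ℕ → Ω' → S} {N' : ℕ → Ω' → G} (hX' : ∀ k, Measurable (X' k))
    (hN' : ∀ k, Measurable (N' k))
    (h_law : P.map (fun ω => (path N ω, path X ω)) = P'.map fun ω => (path N' ω, path X' ω)) :
    IsSolution P' μ X' N' := by
  rwa [← isSolution_map_path_iff hX' hN', ← h_law,
    isSolution_map_path_iff h.measurable_X h.measurable_N]

theorem IsSolution.iIndepFun_noise [IsProbabilityMeasure P] (h : IsSolution P μ X N) :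
    iIndepFun N P :=
  iIndep_of_indep_iSup_gt fun k => indep_of_indep_of_le_right (h.indep k) le_sup_right

theorem IsSolution.map_path_noise [IsProbabilityMeasure P] (h : IsSolution P μ X N) :
    P.map (path N) = Measure.infinitePi μ := by
  rw [← funext h.law_N]
  exact h.iIndepFun_noise.map_fun_eq_infinitePi_map h.measurable_N

theorem IsSolution.exists_measurable_past_succ_ae_eq [StandardBorelSpace S]
    [IsProbabilityMeasure P] (h : IsSolution P μ X N) {j k : ℕ} (hjk : j < k) {Y : Ω → S}
    (hY : Measurable[past N j] Y) (hXY : X k =ᵐ[P] Y) :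
    ∃ Y' : Ω → S, Measurable[past N (j + 1)] Y' ∧ X k =ᵐ[P] Y' := by
  rw [past_eq_comap_sup_past_succ] at hY
  exact exists_measurable_ae_eq_of_indep le_sup_right
    (sup_le (past_le h.measurable_X _) (past_le h.measurable_N _)) (h.measurable_N j) (h.indep j)
    ((measurable_past X hjk).mono le_sup_left le_rfl) hY hXY

theorem IsSolution.isStrong_of_path_ae_eq [StandardBorelSpace S] [IsProbabilityMeasure P]
    (h : IsSolution P μ X N) {F : (ℕ → G) → ℕ → S} (hF : Measurable F)
    (hXF : path X =ᵐ[P] F ∘ path N) : IsStrong P X N := by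
  intro k
  suffices ∀ j ≤ k, ∃ Y : Ω → S, Measurable[past N j] Y ∧ X k =ᵐ[P] Y from this k le_rfl
  intro j
  induction j with
  | zero =>
    intro _
    have path_meas : Measurable[past N 0] (path N) :=
      @measurable_pi_lambda _ _ _ (past N 0) _ _ fun j => measurable_past N j.zero_le
    exact ⟨fun ω => F (path N ω) k, (measurable_pi_apply k).comp (hF.comp path_meas),
      hXF.mono fun ω hω => congrFun hω k⟩
  | succ j ih =>
    intro hjk
    obtain ⟨Y, hY, hXY⟩ := ih (j.le_succ.trans hjk)
    exact h.exists_measurable_past_succ_ae_eq hjk hY hXY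

end Solution

section PathwiseUniqueness

variable {S : Type u} {G : Type v} [MeasurableSpace S] [MeasurableSpace G] [SMul G S]
  {μ : ℕ → Measure G}

/-- Pathwise uniqueness for Tsirelson's equation in `S` with noise law `μ`. The probability spaces
range over `Type (max u v)`, the universe of the path space on which two solutions are glued. -/
def PathwiseUniqueness (S : Type u) {G : Type v} [MeasurableSpace S] [MeasurableSpace G]
    [SMul G S] (μ : ℕ → Measure G) : Prop :=
  ∀ (Ω : Type (max u v)) (_ : MeasurableSpace Ω) (P : Measure Ω) (X X' : ℕ → Ω → S)
    (N : ℕ → Ω → G), IsProbabilityMeasure P → IsSolution P μ X N → IsSolution P μ X' N →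
    ∀ k, X k =ᵐ[P] X' k

variable [StandardBorelSpace S] [MeasurableSMul₂ G S] {Ω Ω₁ Ω₂ : Type*} [MeasurableSpace Ω]
  [MeasurableSpace Ω₁] [MeasurableSpace Ω₂] {P : Measure Ω} {P₁ : Measure Ω₁} {P₂ : Measure Ω₂}
  [IsProbabilityMeasure P] [IsProbabilityMeasure P₁] [IsProbabilityMeasure P₂]
  {X : ℕ → Ω → S} {N : ℕ → Ω → G} {X₁ : ℕ → Ω₁ → S} {N₁ : ℕ → Ω₁ → G}
  {X₂ : ℕ → Ω₂ → S} {N₂ : ℕ → Ω₂ → G}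

theorem PathwiseUniqueness.ae_gluing [Nonempty S] (hpw : PathwiseUniqueness S μ)
    (h₁ : IsSolution P₁ μ X₁ N₁) (h₂ : IsSolution P₂ μ X₂ N₂) :
    ∀ᵐ p ∂gluing P₁ (path X₁) (path N₁) P₂ (path X₂) (path N₂), p.2.1 = p.2.2 := by
  set Q := gluing P₁ (path X₁) (path N₁) P₂ (path X₂) (path N₂)
  have : IsProbabilityMeasure Q :=
    isProbabilityMeasure_gluing (measurable_path h₁.measurable_N).aemeasurable
  have hQ₁ : IsSolution Q μ (fun k p => p.2.1 k) (fun k p => p.1 k) :=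
    h₁.of_map_path_eq (by fun_prop) (by fun_prop)
      (map_gluing_fst (measurable_path h₁.measurable_X).aemeasurable).symm
  have hQ₂ : IsSolution Q μ (fun k p => p.2.2 k) (fun k p => p.1 k) :=
    h₂.of_map_path_eq (by fun_prop) (by fun_prop)
      (map_gluing_snd (measurable_path h₂.measurable_X).aemeasurable
        (h₁.map_path_noise.trans h₂.map_path_noise.symm)).symm
  filter_upwards [ae_all_iff.2 (hpw _ _ Q _ _ _ this hQ₁ hQ₂)] with p hp
  exact funext hp

theorem PathwiseUniqueness.jointLaw_eq (hpw : PathwiseUniqueness S μ)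
    (h₁ : IsSolution P₁ μ X₁ N₁) (h₂ : IsSolution P₂ μ X₂ N₂) :
    jointLaw P₁ X₁ N₁ = jointLaw P₂ X₂ N₂ := by
  have : Nonempty S := (nonempty_of_isProbabilityMeasure P₁).map (X₁ 0)
  have hX₁ := measurable_path h₁.measurable_X
  have hN₁ := measurable_path h₁.measurable_N
  have hX₂ := measurable_path h₂.measurable_X
  have hN₂ := measurable_path h₂.measurable_N
  have law_eq := map_prodMk_eq_of_ae_gluing hX₁.aemeasurable hX₂.aemeasurable
    (h₁.map_path_noise.trans h₂.map_path_noise.symm) (hpw.ae_gluing h₁ h₂)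
  have swapped_law_eq := congrArg (Measure.map Prod.swap) law_eq
  rwa [Measure.map_map measurable_swap (hN₁.prodMk hX₁),
    Measure.map_map measurable_swap (hN₂.prodMk hX₂)] at swapped_law_eq

theorem PathwiseUniqueness.isStrong (hpw : PathwiseUniqueness S μ) (h : IsSolution P μ X N) :
    IsStrong P X N := by
  have : Nonempty S := (nonempty_of_isProbabilityMeasure P).map (X 0)
  obtain ⟨F, hF, hXF⟩ := exists_measurable_ae_eq_comp_of_ae_gluing_self
    (measurable_path h.measurable_X).aemeasurable (measurable_path h.measurable_N).aemeasurable
    (hpw.ae_gluing h h)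
  exact h.isStrong_of_path_ae_eq hF hXF

end PathwiseUniqueness

theorem tsirelson_uniqueness_in_law_and_strong_of_pathwise_uniqueness_general
    {S : Type u} {G : Type v} [MeasurableSpace S] [StandardBorelSpace S] [MeasurableSpace G]
    [SMul G S] [MeasurableSMul₂ G S] {μ : ℕ → Measure G} (hpw : PathwiseUniqueness S μ) :
    (∀ (Ω₁ : Type w) (_ : MeasurableSpace Ω₁) (P₁ : Measure Ω₁)
      (X₁ : ℕ → Ω₁ → S) (N₁ : ℕ → Ω₁ → G)
      (Ω₂ : Type w₂) (_ : MeasurableSpace Ω₂) (P₂ : Measure Ω₂)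
      (X₂ : ℕ → Ω₂ → S) (N₂ : ℕ → Ω₂ → G),
      IsProbabilityMeasure P₁ → IsProbabilityMeasure P₂ →
      IsSolution P₁ μ X₁ N₁ → IsSolution P₂ μ X₂ N₂ →
      jointLaw P₁ X₁ N₁ = jointLaw P₂ X₂ N₂) ∧
    (∀ (Ω : Type w) (_ : MeasurableSpace Ω) (P : Measure Ω)
      (X : ℕ → Ω → S) (N : ℕ → Ω → G),
      IsProbabilityMeasure P → IsSolution P μ X N → IsStrong P X N) :=
  ⟨fun _ _ _ _ _ _ _ _ _ _ _ _ h₁ h₂ => hpw.jointLaw_eq h₁ h₂,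
    fun _ _ _ _ _ _ h => hpw.isStrong h⟩

section Tsirelson

variable {S : Type u} {G : Type v}
  [TopologicalSpace S] [CompactSpace S] [TopologicalSpace.MetrizableSpace S]
  [SecondCountableTopology S] [MeasurableSpace S] [BorelSpace S]
  [TopologicalSpace G] [CompactSpace G] [TopologicalSpace.MetrizableSpace G]
  [SecondCountableTopology G] [MeasurableSpace G] [BorelSpace G]
  [Semigroup G] [ContinuousMul G]
  [SMul G S] [ContinuousSMul G S] [IsScalarTower G G S]

/-- **Yamada–Watanabe, part (ii).** Pathwise uniqueness implies uniqueness in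
law and that every solution is strong. -/
theorem tsirelson_uniqueness_in_law_and_strong_of_pathwise_uniqueness
    (μ : ℕ → Measure G) (hμ : ∀ k, IsProbabilityMeasure (μ k))
    (hpw : ∀ (Ω : Type (max u v)) (_ : MeasurableSpace Ω) (P : Measure Ω)
      (X X' : ℕ → Ω → S) (N : ℕ → Ω → G),
      IsProbabilityMeasure P → IsSolution P μ X N → IsSolution P μ X' N →
      ∀ k, X k =ᵐ[P] X' k) :
    (∀ (Ω₁ : Type (max u v)) (_ : MeasurableSpace Ω₁) (P₁ : Measure Ω₁)
      (X₁ : ℕ → Ω₁ → S) (N₁ : ℕ → Ω₁ → G)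
      (Ω₂ : Type (max u v)) (_ : MeasurableSpace Ω₂) (P₂ : Measure Ω₂)
      (X₂ : ℕ → Ω₂ → S) (N₂ : ℕ → Ω₂ → G),
      IsProbabilityMeasure P₁ → IsProbabilityMeasure P₂ →
      IsSolution P₁ μ X₁ N₁ → IsSolution P₂ μ X₂ N₂ →
      jointLaw P₁ X₁ N₁ = jointLaw P₂ X₂ N₂) ∧
    (∀ (Ω : Type (max u v)) (_ : MeasurableSpace Ω) (P : Measure Ω)
      (X : ℕ → Ω → S) (N : ℕ → Ω → G),
      IsProbabilityMeasure P → IsSolution P μ X N → IsStrong P X N) := by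
  let := TopologicalSpace.metrizableSpaceMetric S
  exact tsirelson_uniqueness_in_law_and_strong_of_pathwise_uniqueness_general hpw

end Tsirelson
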